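/- Let ρ_AB, ρ_BC, ρ_AC be three compatible fully classical bipartite states (i.e., there exists a tripartite density matrix ρ_ABC with these as its two-body reductions). If the operators ρ_AB ⊗ I_C, ρ_AC ⊗ I_B, ρ_BC ⊗ I_A pairwise commute, then there exists a fully classical tripartite state with reductions ρ_AB, ρ_BC, ρ_AC. In particular, one can take σ_ABC = Σ_{ijk} |a_i b_j c_k⟩⟨a_i b_j c_k| ρ_ABC |a_i b_j c_k⟩⟨a_i b_j c_k| for a suitable common product basis. -/

import Mathlib

open Matrix BigOperators
open scoped Kronecker ComplexOrder

namespace QMarginal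

abbrev Mat (n : ℕ) := Matrix (Fin n) (Fin n) ℂ
abbrev Bip (m n : ℕ) := Matrix (Fin m × Fin n) (Fin m × Fin n) ℂ
abbrev Tri (dA dB dC : ℕ) := Matrix (Fin dA × Fin dB × Fin dC) (Fin dA × Fin dB × Fin dC) ℂ

/-- partial trace over the third system -/
noncomputable def trC {dA dB dC : ℕ} (ρ : Tri dA dB dC) : Bip dA dB :=
  fun x y => ∑ c : Fin dC, ρ (x.1, x.2, c) (y.1, y.2, c)

/-- partial trace over the second system -/
noncomputable def trB {dA dB dC : ℕ} (ρ : Tri dA dB dC) : Bip dA dC :=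
  fun x y => ∑ b : Fin dB, ρ (x.1, b, x.2) (y.1, b, y.2)

/-- partial trace over the first system -/
noncomputable def trA {dA dB dC : ℕ} (ρ : Tri dA dB dC) : Bip dB dC :=
  fun x y => ∑ a : Fin dA, ρ (a, x.1, x.2) (a, y.1, y.2)

/-- partial trace of a bipartite matrix over the right factor -/
noncomputable def trR {m n : ℕ} (ρ : Bip m n) : Mat m :=
  fun i j => ∑ b : Fin n, ρ (i, b) (j, b)

/-- partial trace of a bipartite matrix over the left factor -/
noncomputable def trL {m n : ℕ} (ρ : Bip m n) : Mat n :=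
  fun i j => ∑ a : Fin m, ρ (a, i) (a, j)

def IsDensity {ι : Type*} [Fintype ι] [DecidableEq ι] (ρ : Matrix ι ι ℂ) : Prop :=
  ρ.PosSemidef ∧ ρ.trace = 1

/-- rank-one projector onto a vector -/
def projV {ι : Type*} (v : ι → ℂ) : Matrix ι ι ℂ := fun i j => v i * star (v j)

def prod2 {m n : ℕ} (v : Fin m → ℂ) (w : Fin n → ℂ) : Fin m × Fin n → ℂ :=
  fun x => v x.1 * w x.2

def prod3 {dA dB dC : ℕ} (u : Fin dA → ℂ) (v : Fin dB → ℂ) (w : Fin dC → ℂ) :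
    Fin dA × Fin dB × Fin dC → ℂ :=
  fun x => u x.1 * v x.2.1 * w x.2.2

/-- a family of vectors forming an orthonormal basis -/
def ONB {n : ℕ} (a : Fin n → Fin n → ℂ) : Prop :=
  ∀ i j, (∑ k, star (a i k) * a j k) = if i = j then (1:ℂ) else 0

/-- fully classical bipartite state -/
def FullyClassical {m n : ℕ} (ρ : Bip m n) : Prop :=
  ∃ (a : Fin m → Fin m → ℂ) (b : Fin n → Fin n → ℂ) (p : Fin m → Fin n → ℝ),
    ONB a ∧ ONB b ∧ (∀ i j, 0 ≤ p i j) ∧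
    ρ = ∑ i, ∑ j, (p i j) • projV (prod2 (a i) (b j))

/-- fully classical tripartite state -/
def FullyClassicalTri {dA dB dC : ℕ} (ρ : Tri dA dB dC) : Prop :=
  ∃ (a : Fin dA → Fin dA → ℂ) (b : Fin dB → Fin dB → ℂ) (c : Fin dC → Fin dC → ℂ)
    (f : Fin dA → Fin dB → Fin dC → ℝ),
    ONB a ∧ ONB b ∧ ONB c ∧ (∀ i j k, 0 ≤ f i j k) ∧
    ρ = ∑ i, ∑ j, ∑ k, (f i j k) • projV (prod3 (a i) (b j) (c k))

/-- fully separable tripartite state -/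
def FullySepTri {dA dB dC : ℕ} (ρ : Tri dA dB dC) : Prop :=
  ∃ (N : ℕ) (p : Fin N → ℝ) (u : Fin N → Fin dA → ℂ) (v : Fin N → Fin dB → ℂ)
    (w : Fin N → Fin dC → ℂ),
    (∀ i, 0 ≤ p i) ∧ ρ = ∑ i, (p i) • projV (prod3 (u i) (v i) (w i))

/-- M ⊗ I_C on the tripartite space, M acting on A ⊗ B -/
def embAB {dA dB : ℕ} (M : Bip dA dB) (dC : ℕ) : Tri dA dB dC :=
  fun x y => M (x.1, x.2.1) (y.1, y.2.1) * (if x.2.2 = y.2.2 then 1 else 0)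

/-- M ⊗ I_B on the tripartite space, M acting on A ⊗ C -/
def embAC {dA dC : ℕ} (M : Bip dA dC) (dB : ℕ) : Tri dA dB dC :=
  fun x y => M (x.1, x.2.2) (y.1, y.2.2) * (if x.2.1 = y.2.1 then 1 else 0)

/-- M ⊗ I_A on the tripartite space, M acting on B ⊗ C -/
def embBC {dB dC : ℕ} (M : Bip dB dC) (dA : ℕ) : Tri dA dB dC :=
  fun x y => M (x.2.1, x.2.2) (y.2.1, y.2.2) * (if x.1 = y.1 then 1 else 0)

/-!
Let two of the embedded marginals, say `ρ_AB ⊗ 1_C` and `ρ_AC ⊗ 1_B`, commute. Then every block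
`⟨b|ρ_AB|b'⟩` on `A` commutes with every block `⟨c|ρ_AC|c'⟩` on `A`. The blocks of a fully classical
state are diagonal in its classical basis, so they form a commuting family of normal matrices.
Hence each of `A`, `B`, `C` has an orthonormal basis diagonalizing all blocks of both marginals it
belongs to, and each bipartite marginal is diagonal in the resulting product basis. Pinching
`ρ_ABC` in that basis gives a fully classical state. Partial traces intertwine this pinching with
the pinching of the marginal, which leaves the marginal unchanged.
-/

section SimultaneousDiagonalization

variable {n ι κ 𝕜 E : Type*} [Fintype n] [DecidableEq n] [RCLike 𝕜]

lemma exists_orthonormalBasis_forall_mem_eigenspace [NormedAddCommGroup E] [InnerProductSpace 𝕜 E]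
    [FiniteDimensional 𝕜 E] {T : ι → E →ₗ[𝕜] E} (hT : ∀ i, (T i).IsSymmetric)
    (hcomm : ∀ i j, Commute (T i) (T j)) :
    ∃ b : OrthonormalBasis (Fin (Module.finrank 𝕜 E)) 𝕜 E,
      ∀ i k, ∃ μ, b k ∈ Module.End.eigenspace (T i) μ := by
  classical
  have hint := LinearMap.IsSymmetric.directSum_isInternal_of_pairwise_commute hT
    fun i j _ => hcomm i j
  let b := hint.collectedBasis fun _ => (stdOrthonormalBasis 𝕜 _).toBasis
  have hb : Orthonormal 𝕜 b := hint.collectedBasis_orthonormal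
    (LinearMap.IsSymmetric.orthogonalFamily_iInf_eigenspaces hT) fun _ => by
      simp [OrthonormalBasis.orthonormal]
  have : Fintype ((χ : ι → 𝕜) × Fin (Module.finrank 𝕜
      ↥(⨅ i, Module.End.eigenspace (T i) (χ i)))) := FiniteDimensional.fintypeBasisIndex b
  let e := Fintype.equivFinOfCardEq (Module.finrank_eq_card_basis b).symm
  refine ⟨(b.toOrthonormalBasis hb).reindex e, fun i k => ⟨(e.symm k).1 i, ?_⟩⟩
  have hmem : b (e.symm k) ∈ ⨅ i, Module.End.eigenspace (T i) ((e.symm k).1 i) :=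
    hint.collectedBasis_mem _ (e.symm k)
  simpa using (Submodule.mem_iInf _).mp hmem i

/-- A family of square matrices is simultaneously diagonalizable if a single unitary matrix
conjugates all its members to diagonal matrices. -/
def SimultaneouslyDiagonalizable (S : ι → Matrix n n 𝕜) : Prop :=
  ∃ U ∈ unitaryGroup n 𝕜, ∀ i, (Uᴴ * S i * U).IsDiag

lemma simultaneouslyDiagonalizable_of_isHermitian {S : ι → Matrix n n 𝕜}
    (hS : ∀ i, (S i).IsHermitian) (hcomm : ∀ i j, Commute (S i) (S j)) :
    SimultaneouslyDiagonalizable S := by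
  have hcomm' (i j) : Commute (toEuclideanLin (S i)) (toEuclideanLin (S j)) := by
    have h := congrArg (toLpLin 2 2) (hcomm i j).eq
    rwa [toLpLin_mul _ 2, toLpLin_mul _ 2] at h
  obtain ⟨b₀, hb₀⟩ := exists_orthonormalBasis_forall_mem_eigenspace
    (fun i => isSymmetric_toEuclideanLin_iff.mpr (hS i)) hcomm'
  let e : Fin (Module.finrank 𝕜 (EuclideanSpace 𝕜 n)) ≃ n :=
    Fintype.equivOfCardEq (by simp)
  let b := b₀.reindex e
  refine ⟨(EuclideanSpace.basisFun n 𝕜).toBasis.toMatrix b,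
    (EuclideanSpace.basisFun n 𝕜).toMatrix_orthonormalBasis_mem_unitary b, fun i j k hjk => ?_⟩
  obtain ⟨μ, hμ⟩ := hb₀ i (e.symm k)
  have heig : toEuclideanLin (S i) (b k) = μ • b k := by
    simpa [b] using Module.End.mem_eigenspace_iff.mp hμ
  calc _ = inner 𝕜 (b j) (toEuclideanLin (S i) (b k)) := by
        rw [Matrix.mul_assoc, EuclideanSpace.inner_eq_star_dotProduct, dotProduct_comm]
        rfl
    _ = 0 := by rw [heig, inner_smul_right, b.inner_eq_zero hjk, mul_zero]

lemma isDiag_conjTranspose_mul_mul_iff {U X : Matrix n n 𝕜} (hU : U ∈ unitaryGroup n 𝕜) :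
    (Uᴴ * X * U).IsDiag ↔ ∃ d, X = U * diagonal d * Uᴴ := by
  have hU₁ : Uᴴ * U = 1 := mem_unitaryGroup_iff'.mp hU
  have hU₂ : U * Uᴴ = 1 := mem_unitaryGroup_iff.mp hU
  constructor
  · intro h
    refine ⟨diag (Uᴴ * X * U), ?_⟩
    calc X = (U * Uᴴ) * X * (U * Uᴴ) := by simp [hU₂]
      _ = U * (Uᴴ * X * U) * Uᴴ := by simp only [Matrix.mul_assoc]
      _ = U * diagonal (diag (Uᴴ * X * U)) * Uᴴ := by rw [h.diagonal_diag]
  · rintro ⟨d, rfl⟩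
    have hd : Uᴴ * (U * diagonal d * Uᴴ) * U = diagonal d :=
      calc _ = (Uᴴ * U) * diagonal d * (Uᴴ * U) := by simp only [Matrix.mul_assoc]
        _ = diagonal d := by simp [hU₁]
    rw [hd]
    exact isDiag_diagonal d

lemma SimultaneouslyDiagonalizable.commute {S : ι → Matrix n n 𝕜}
    (hS : SimultaneouslyDiagonalizable S) (i j : ι) : Commute (S i) (S j) := by
  obtain ⟨U, hU, hdiag⟩ := hS
  obtain ⟨d, hd⟩ := (isDiag_conjTranspose_mul_mul_iff hU).mp (hdiag i)
  obtain ⟨d', hd'⟩ := (isDiag_conjTranspose_mul_mul_iff hU).mp (hdiag j)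
  rw [hd, hd']
  exact ((Commute.all d d').map (diagonalRingHom n 𝕜)).map (Unitary.conjStarAlgAut 𝕜 _ ⟨U, hU⟩)

lemma SimultaneouslyDiagonalizable.isStarNormal {S : ι → Matrix n n 𝕜}
    (hS : SimultaneouslyDiagonalizable S) (i : ι) : IsStarNormal (S i) := by
  obtain ⟨U, hU, hdiag⟩ := hS
  have hS' : SimultaneouslyDiagonalizable (Sum.elim S fun j => (S j)ᴴ) := by
    refine ⟨U, hU, Sum.rec hdiag fun j => ?_⟩
    simpa [Matrix.mul_assoc] using (hdiag j).conjTranspose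
  exact ⟨hS'.commute (Sum.inr i) (Sum.inl i)⟩

open ComplexStarModule Matrix.Norms.L2Operator in
lemma simultaneouslyDiagonalizable_iff {S : ι → Matrix n n ℂ} :
    SimultaneouslyDiagonalizable S ↔
      (∀ i, IsStarNormal (S i)) ∧ ∀ i j, Commute (S i) (S j) := by
  refine ⟨fun h => ⟨h.isStarNormal, h.commute⟩, fun ⟨hnormal, hcomm⟩ => ?_⟩
  have commute_re_im {X Y : Matrix n n ℂ} (h : Commute X Y) (h' : Commute X (star Y)) :
      Commute X (ℜ Y : Matrix n n ℂ) ∧ Commute X (ℑ Y : Matrix n n ℂ) := by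
    rw [realPart_apply_coe, imaginaryPart_apply_coe]
    exact ⟨(h.add_right h').smul_right _, ((h.sub_right h').smul_right _).smul_right _⟩
  have commute_re_im' {X : selfAdjoint (Matrix n n ℂ)} {Y : Matrix n n ℂ} (h : Commute X.1 Y) :
      Commute X.1 (ℜ Y : Matrix n n ℂ) ∧ Commute X.1 (ℑ Y : Matrix n n ℂ) :=
    commute_re_im h (by simpa [X.2.star_eq] using h.star_star)
  -- Fuglede: a matrix commuting with a normal matrix commutes with its adjoint.
  have hre_im (i j) := commute_re_im (hcomm i j) ((hnormal j).commute_star_right (hcomm i j))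
  let R : ι ⊕ ι → selfAdjoint (Matrix n n ℂ) := Sum.elim (fun i => ℜ (S i)) (fun i => ℑ (S i))
  have hR : ∀ p q, Commute (R p).1 (R q).1 := by
    rintro (i | i) (j | j)
    · exact (commute_re_im' (hre_im j i).1.symm).1
    · exact (commute_re_im' (hre_im j i).1.symm).2
    · exact (commute_re_im' (hre_im j i).2.symm).1
    · exact (commute_re_im' (hre_im j i).2.symm).2
  obtain ⟨U, hU, hdiag⟩ := simultaneouslyDiagonalizable_of_isHermitian (fun p => (R p).2) hR
  refine ⟨U, hU, fun i => ?_⟩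
  rw [← realPart_add_I_smul_imaginaryPart (S i), Matrix.mul_add, Matrix.add_mul, Matrix.mul_smul,
    Matrix.smul_mul]
  exact (hdiag (Sum.inl i)).add ((hdiag (Sum.inr i)).smul _)

lemma SimultaneouslyDiagonalizable.sumElim {S : ι → Matrix n n ℂ} {T : κ → Matrix n n ℂ}
    (hS : SimultaneouslyDiagonalizable S) (hT : SimultaneouslyDiagonalizable T)
    (hcomm : ∀ i j, Commute (S i) (T j)) : SimultaneouslyDiagonalizable (Sum.elim S T) :=
  simultaneouslyDiagonalizable_iff.mpr
    ⟨Sum.rec hS.isStarNormal hT.isStarNormal,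
      Sum.rec (fun i => Sum.rec (hS.commute i) (hcomm i))
        fun i => Sum.rec (fun j => (hcomm j i).symm) (hT.commute i)⟩

end SimultaneousDiagonalization

section Blocks

variable {m n R : Type*}

/-- The block `(⟨·| ⊗ ⟨b|) X (|·⟩ ⊗ |b'⟩)` of a matrix on a product space, acting on the left
factor. -/
def leftBlock (X : Matrix (m × n) (m × n) R) (b b' : n) : Matrix m m R :=
  X.submatrix (·, b) (·, b')

/-- The block `(⟨a| ⊗ ⟨·|) X (|a'⟩ ⊗ |·⟩)` of a matrix on a product space, acting on the right
factor. -/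
def rightBlock (X : Matrix (m × n) (m × n) R) (a a' : m) : Matrix n n R :=
  X.submatrix (a, ·) (a', ·)

lemma isDiag_leftBlock_iff [Zero R] {X : Matrix (m × n) (m × n) R} :
    (∀ b b', (leftBlock X b b').IsDiag) ↔ ∀ a a', a ≠ a' → rightBlock X a a' = 0 :=
  ⟨fun h _ _ ha => ext fun b b' => h b b' ha, fun h b b' _ _ ha => congrFun₂ (h _ _ ha) b b'⟩

lemma isDiag_rightBlock_iff [Zero R] {X : Matrix (m × n) (m × n) R} :
    (∀ a a', (rightBlock X a a').IsDiag) ↔ ∀ b b', b ≠ b' → leftBlock X b b' = 0 :=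
  ⟨fun h _ _ hb => ext fun a a' => h a a' hb, fun h a a' _ _ hb => congrFun₂ (h _ _ hb) a a'⟩

lemma isDiag_iff_block_eq_zero [Zero R] {X : Matrix (m × n) (m × n) R} :
    X.IsDiag ↔ (∀ a a', a ≠ a' → rightBlock X a a' = 0) ∧
      ∀ b b', b ≠ b' → leftBlock X b b' = 0 := by
  refine ⟨fun h => ⟨fun a a' ha => ?_, fun b b' hb => ?_⟩, ?_⟩
  · exact ext fun b b' => h fun hab => ha (congrArg Prod.fst hab)
  · exact ext fun a a' => h fun hab => hb (congrArg Prod.snd hab)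
  · rintro ⟨hr, hl⟩ ⟨a, b⟩ ⟨a', b'⟩ hab
    by_cases ha : a = a'
    · exact congrFun₂ (hl b b' fun hb => hab (Prod.ext ha hb)) a a'
    · exact congrFun₂ (hr a a' ha) b b'

variable [Fintype m] [Fintype n]

lemma leftBlock_kronecker_one_mul_mul [DecidableEq n] [Semiring R] (K L : Matrix m m R)
    (X : Matrix (m × n) (m × n) R) (b b' : n) :
    leftBlock ((K ⊗ₖ (1 : Matrix n n R)) * X * (L ⊗ₖ (1 : Matrix n n R))) b b'
      = K * leftBlock X b b' * L := by
  ext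
  simp [leftBlock, Matrix.mul_apply, Fintype.sum_prod_type, Matrix.one_apply]

lemma rightBlock_one_kronecker_mul_mul [DecidableEq m] [Semiring R] (K L : Matrix n n R)
    (X : Matrix (m × n) (m × n) R) (a a' : m) :
    rightBlock (((1 : Matrix m m R) ⊗ₖ K) * X * ((1 : Matrix m m R) ⊗ₖ L)) a a'
      = K * rightBlock X a a' * L := by
  ext
  simp [rightBlock, Matrix.mul_apply, Fintype.sum_prod_type, Matrix.one_apply]

variable [CommRing R] [StarRing R]

lemma conjTranspose_mul_mul_eq_zero_iff [DecidableEq n] {V Y : Matrix n n R}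
    (hV : V ∈ unitaryGroup n R) :
    Vᴴ * Y * V = 0 ↔ Y = 0 := by
  have hV' : V * Vᴴ = 1 := mem_unitaryGroup_iff.mp hV
  refine ⟨fun h => ?_, fun h => by simp [h]⟩
  calc Y = (V * Vᴴ) * Y * (V * Vᴴ) := by simp [hV']
    _ = V * (Vᴴ * Y * V) * Vᴴ := by simp only [Matrix.mul_assoc]
    _ = 0 := by simp [h]

variable {U : Matrix m m R} {V : Matrix n n R} {X : Matrix (m × n) (m × n) R}

lemma rightBlock_kronecker_conj [DecidableEq n] (a a' : m) :
    rightBlock ((U ⊗ₖ V)ᴴ * X * (U ⊗ₖ V)) a a' =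
      Vᴴ * rightBlock ((U ⊗ₖ (1 : Matrix n n R))ᴴ * X * (U ⊗ₖ (1 : Matrix n n R))) a a' * V := by
  classical
  have hUV : U ⊗ₖ V = (U ⊗ₖ (1 : Matrix n n R)) * ((1 : Matrix m m R) ⊗ₖ V) := by
    simp [← mul_kronecker_mul]
  rw [← rightBlock_one_kronecker_mul_mul, hUV]
  simp [Matrix.mul_assoc, conjTranspose_kronecker]

lemma leftBlock_kronecker_conj [DecidableEq m] (b b' : n) :
    leftBlock ((U ⊗ₖ V)ᴴ * X * (U ⊗ₖ V)) b b' =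
      Uᴴ * leftBlock (((1 : Matrix m m R) ⊗ₖ V)ᴴ * X * ((1 : Matrix m m R) ⊗ₖ V)) b b' * U := by
  classical
  have hUV : U ⊗ₖ V = ((1 : Matrix m m R) ⊗ₖ V) * (U ⊗ₖ (1 : Matrix n n R)) := by
    simp [← mul_kronecker_mul]
  rw [← leftBlock_kronecker_one_mul_mul, hUV]
  simp [Matrix.mul_assoc, conjTranspose_kronecker]

lemma isDiag_kronecker_conj_iff [DecidableEq m] [DecidableEq n]
    (hU : U ∈ unitaryGroup m R) (hV : V ∈ unitaryGroup n R) :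
    ((U ⊗ₖ V)ᴴ * X * (U ⊗ₖ V)).IsDiag ↔
      (∀ b b', (Uᴴ * leftBlock X b b' * U).IsDiag) ∧
        ∀ a a', (Vᴴ * rightBlock X a a' * V).IsDiag := by
  simp only [isDiag_iff_block_eq_zero, rightBlock_kronecker_conj (U := U) (V := V),
    leftBlock_kronecker_conj (U := U) (V := V), conjTranspose_mul_mul_eq_zero_iff hU,
    conjTranspose_mul_mul_eq_zero_iff hV]
  simp only [← isDiag_leftBlock_iff, ← isDiag_rightBlock_iff, conjTranspose_kronecker,
    conjTranspose_one, leftBlock_kronecker_one_mul_mul, rightBlock_one_kronecker_mul_mul]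

end Blocks

section PartialTrace

variable {m n R : Type*} [Fintype n]

/-- The partial trace of a matrix on a product space over the right factor. -/
def partialTraceRight [AddCommMonoid R] (X : Matrix (m × n) (m × n) R) : Matrix m m R :=
  ∑ b, leftBlock X b b

lemma trace_partialTraceRight_mul [Fintype m] [DecidableEq n] [Semiring R]
    (X : Matrix (m × n) (m × n) R) (Y : Matrix m m R) :
    trace (partialTraceRight X * Y) = trace (X * (Y ⊗ₖ (1 : Matrix n n R))) := by
  calc _ = ∑ a, ∑ b, ∑ a', X (a, b) (a', b) * Y a' a := by
        simp [partialTraceRight, leftBlock, trace, Matrix.sum_mul, Matrix.sum_apply,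
          Matrix.mul_apply]
    _ = _ := by simp [trace, Matrix.mul_apply, Fintype.sum_prod_type, Matrix.one_apply]

end PartialTrace

section Pinching

variable {m n p R : Type*} [Fintype m] [Fintype n] [Fintype p] [DecidableEq m] [DecidableEq n]
  [DecidableEq p] [CommRing R] [StarRing R]

/-- The pinching `∑ i, |uᵢ⟩⟨uᵢ| X |uᵢ⟩⟨uᵢ|` of `X` along the columns `uᵢ` of `U`. -/
def pinch (U X : Matrix n n R) : Matrix n n R :=
  U * diagonal (diag (Uᴴ * X * U)) * Uᴴ

lemma pinch_eq_self {U X : Matrix n n R} (hU : U ∈ unitaryGroup n R)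
    (hX : (Uᴴ * X * U).IsDiag) : pinch U X = X := by
  have hU' : U * Uᴴ = 1 := mem_unitaryGroup_iff.mp hU
  calc pinch U X = (U * Uᴴ) * X * (U * Uᴴ) := by
        rw [pinch, hX.diagonal_diag]
        simp only [Matrix.mul_assoc]
    _ = X := by simp [hU']

lemma pinch_one {U : Matrix n n R} (hU : U ∈ unitaryGroup n R) : pinch U 1 = 1 := by
  refine pinch_eq_self hU ?_
  rw [Matrix.mul_one, ← star_eq_conjTranspose, mem_unitaryGroup_iff'.mp hU]
  exact isDiag_one

lemma pinch_kronecker (U X : Matrix m m R) (V Y : Matrix n n R) :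
    pinch (U ⊗ₖ V) (X ⊗ₖ Y) = pinch U X ⊗ₖ pinch V Y := by
  have hdiag (A : Matrix m m R) (B : Matrix n n R) :
      diagonal (diag (A ⊗ₖ B)) = diagonal (diag A) ⊗ₖ diagonal (diag B) := by
    rw [diagonal_kronecker_diagonal]
    rfl
  simp only [pinch, conjTranspose_kronecker, ← mul_kronecker_mul, hdiag]

lemma pinch_submatrix_equiv (e : m ≃ n) (U X : Matrix n n R) :
    (pinch U X).submatrix e e = pinch (U.submatrix e e) (X.submatrix e e) := by
  have hdiag (A : Matrix n n R) :
      (diagonal (diag A)).submatrix e e = diagonal (diag (A.submatrix e e)) :=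
    submatrix_diagonal_equiv _ e
  simp only [pinch, ← submatrix_mul_equiv _ _ e e e, conjTranspose_submatrix, hdiag]

lemma trace_pinch_mul (U X Y : Matrix n n R) :
    trace (pinch U X * Y) = trace (X * pinch U Y) := by
  have trace_eq_sum (A B : Matrix n n R) :
      trace (pinch U A * B) = ∑ i, (Uᴴ * A * U) i i * (Uᴴ * B * U) i i := by
    calc trace (pinch U A * B) = trace (diagonal (diag (Uᴴ * A * U)) * (Uᴴ * B * U)) := by
          rw [pinch, Matrix.mul_assoc, Matrix.mul_assoc, trace_mul_comm]
          simp only [Matrix.mul_assoc]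
      _ = _ := by simp [trace, diagonal_mul]
  rw [trace_mul_comm X, trace_eq_sum, trace_eq_sum]
  simp only [mul_comm]

lemma trace_pinch {U : Matrix n n R} (hU : U ∈ unitaryGroup n R) (X : Matrix n n R) :
    trace (pinch U X) = trace X := by
  simpa [pinch_one hU] using trace_pinch_mul U X 1

/-- Both sides are adjoint, for the trace pairing, to `Y ↦ pinch U Y ⊗ 1`. -/
lemma partialTraceRight_pinch_kronecker {V : Matrix n n R} (hV : V ∈ unitaryGroup n R)
    (U : Matrix m m R) (X : Matrix (m × n) (m × n) R) :
    partialTraceRight (pinch (U ⊗ₖ V) X) = pinch U (partialTraceRight X) := by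
  refine ext_iff_trace_mul_right.mpr fun Y => ?_
  calc trace (partialTraceRight (pinch (U ⊗ₖ V) X) * Y)
      = trace (X * pinch (U ⊗ₖ V) (Y ⊗ₖ (1 : Matrix n n R))) := by
        rw [trace_partialTraceRight_mul, trace_pinch_mul]
    _ = trace (X * (pinch U Y ⊗ₖ (1 : Matrix n n R))) := by rw [pinch_kronecker, pinch_one hV]
    _ = trace (pinch U (partialTraceRight X) * Y) := by
        rw [← trace_partialTraceRight_mul, trace_pinch_mul]

lemma partialTraceRight_submatrix_pinch (e : m × n ≃ p) {U : Matrix m m R} {V : Matrix n n R}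
    {W X : Matrix p p R} (hU : U ∈ unitaryGroup m R) (hV : V ∈ unitaryGroup n R)
    (hW : W.submatrix e e = U ⊗ₖ V)
    (hX : (Uᴴ * partialTraceRight (X.submatrix e e) * U).IsDiag) :
    partialTraceRight ((pinch W X).submatrix e e) = partialTraceRight (X.submatrix e e) := by
  rw [pinch_submatrix_equiv, hW, partialTraceRight_pinch_kronecker hV, pinch_eq_self hU hX]

lemma IsDensity.pinch {U ρ : Matrix n n ℂ} (hρ : IsDensity ρ) (hU : U ∈ unitaryGroup n ℂ) :
    IsDensity (pinch U ρ) := by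
  refine ⟨PosSemidef.mul_mul_conjTranspose_same (PosSemidef.diagonal fun _ => ?_) U, ?_⟩
  · exact (hρ.1.conjTranspose_mul_mul_same U).diag_nonneg
  · rw [trace_pinch hU, hρ.2]

end Pinching

section FullyClassical

variable {m n : ℕ}

lemma onb_col_iff {U : Mat n} : ONB U.col ↔ U ∈ unitaryGroup (Fin n) ℂ := by
  rw [mem_unitaryGroup_iff', ← Matrix.ext_iff]
  simp [ONB, Matrix.mul_apply, Matrix.one_apply, star_apply]

lemma sum_smul_projV_col {ι κ : Type*} [Fintype κ] [DecidableEq κ] (M : Matrix ι κ ℂ)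
    (p : κ → ℝ) :
    ∑ k, p k • projV (M.col k) = M * diagonal (fun k => (p k : ℂ)) * Mᴴ := by
  ext i j
  simp only [Matrix.sum_apply, Matrix.smul_apply, projV, col_apply, Complex.real_smul,
    Matrix.mul_apply (N := Mᴴ), mul_diagonal, conjTranspose_apply]
  exact Finset.sum_congr rfl fun k _ => by ring

lemma FullyClassical.exists_isDiag {ρ : Bip m n} (hρ : FullyClassical ρ) :
    ∃ U ∈ unitaryGroup (Fin m) ℂ, ∃ V ∈ unitaryGroup (Fin n) ℂ,
      ((U ⊗ₖ V)ᴴ * ρ * (U ⊗ₖ V)).IsDiag := by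
  obtain ⟨a, b, p, ha, hb, -, rfl⟩ := hρ
  let U : Mat m := (of a)ᵀ
  let V : Mat n := (of b)ᵀ
  have hU : U ∈ unitaryGroup (Fin m) ℂ := onb_col_iff.mp ha
  have hV : V ∈ unitaryGroup (Fin n) ℂ := onb_col_iff.mp hb
  refine ⟨U, hU, V, hV, (isDiag_conjTranspose_mul_mul_iff (kronecker_mem_unitary hU hV)).mpr
    ⟨fun x => p x.1 x.2, ?_⟩⟩
  rw [← sum_smul_projV_col (U ⊗ₖ V) fun x => p x.1 x.2, Fintype.sum_prod_type]
  rfl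

lemma FullyClassical.simultaneouslyDiagonalizable_leftBlock {ρ : Bip m n}
    (hρ : FullyClassical ρ) :
    SimultaneouslyDiagonalizable (Function.uncurry (leftBlock ρ)) := by
  obtain ⟨U, hU, V, hV, hdiag⟩ := hρ.exists_isDiag
  exact ⟨U, hU, fun b => ((isDiag_kronecker_conj_iff hU hV).mp hdiag).1 b.1 b.2⟩

lemma FullyClassical.simultaneouslyDiagonalizable_rightBlock {ρ : Bip m n}
    (hρ : FullyClassical ρ) :
    SimultaneouslyDiagonalizable (Function.uncurry (rightBlock ρ)) := by
  obtain ⟨U, hU, V, hV, hdiag⟩ := hρ.exists_isDiag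
  exact ⟨V, hV, fun a => ((isDiag_kronecker_conj_iff hU hV).mp hdiag).2 a.1 a.2⟩

end FullyClassical

section Tripartite

variable {dA dB dC : ℕ}

lemma commute_leftBlock_leftBlock {ρAB : Bip dA dB} {ρAC : Bip dA dC}
    (h : Commute (embAB ρAB dC) (embAC ρAC dB)) (b b' : Fin dB) (c c' : Fin dC) :
    Commute (leftBlock ρAB b b') (leftBlock ρAC c c') := by
  ext x y
  simpa [Matrix.mul_apply, embAB, embAC, Fintype.sum_prod_type, leftBlock] using
    congrFun₂ h.eq (x, b, c) (y, b', c')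

lemma commute_rightBlock_leftBlock {ρAB : Bip dA dB} {ρBC : Bip dB dC}
    (h : Commute (embAB ρAB dC) (embBC ρBC dA)) (a a' : Fin dA) (c c' : Fin dC) :
    Commute (rightBlock ρAB a a') (leftBlock ρBC c c') := by
  ext x y
  simpa [Matrix.mul_apply, embAB, embBC, Fintype.sum_prod_type, leftBlock, rightBlock] using
    congrFun₂ h.eq (a, x, c) (a', y, c')

lemma commute_rightBlock_rightBlock {ρAC : Bip dA dC} {ρBC : Bip dB dC}
    (h : Commute (embAC ρAC dB) (embBC ρBC dA)) (a a' : Fin dA) (b b' : Fin dB) :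
    Commute (rightBlock ρAC a a') (rightBlock ρBC b b') := by
  ext x y
  simpa [Matrix.mul_apply, embAC, embBC, Fintype.sum_prod_type, rightBlock] using
    congrFun₂ h.eq (a, b, x) (a', b', y)

variable {U : Mat dA} {V : Mat dB} {W : Mat dC} {ρ : Tri dA dB dC}

lemma trC_pinch (hU : U ∈ unitaryGroup (Fin dA) ℂ) (hV : V ∈ unitaryGroup (Fin dB) ℂ)
    (hW : W ∈ unitaryGroup (Fin dC) ℂ) (hdiag : ((U ⊗ₖ V)ᴴ * trC ρ * (U ⊗ₖ V)).IsDiag) :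
    trC (pinch (U ⊗ₖ (V ⊗ₖ W)) ρ) = trC ρ := by
  let e : (Fin dA × Fin dB) × Fin dC ≃ Fin dA × Fin dB × Fin dC := Equiv.prodAssoc _ _ _
  have htr (X : Tri dA dB dC) : trC X = partialTraceRight (X.submatrix e e) := by
    ext x y
    simp [trC, partialTraceRight, leftBlock, Matrix.sum_apply, e]
  simp only [htr] at hdiag ⊢
  refine partialTraceRight_submatrix_pinch e (kronecker_mem_unitary hU hV) hW ?_ hdiag
  ext x y
  simp [e, mul_assoc]

lemma trB_pinch (hU : U ∈ unitaryGroup (Fin dA) ℂ) (hV : V ∈ unitaryGroup (Fin dB) ℂ)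
    (hW : W ∈ unitaryGroup (Fin dC) ℂ) (hdiag : ((U ⊗ₖ W)ᴴ * trB ρ * (U ⊗ₖ W)).IsDiag) :
    trB (pinch (U ⊗ₖ (V ⊗ₖ W)) ρ) = trB ρ := by
  let e : (Fin dA × Fin dC) × Fin dB ≃ Fin dA × Fin dB × Fin dC :=
    (Equiv.prodAssoc _ _ _).trans ((Equiv.refl _).prodCongr (Equiv.prodComm _ _))
  have htr (X : Tri dA dB dC) : trB X = partialTraceRight (X.submatrix e e) := by
    ext x y
    simp [trB, partialTraceRight, leftBlock, Matrix.sum_apply, e]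
  simp only [htr] at hdiag ⊢
  refine partialTraceRight_submatrix_pinch e (kronecker_mem_unitary hU hW) hV ?_ hdiag
  ext x y
  simp [e, mul_comm, mul_left_comm]

lemma trA_pinch (hU : U ∈ unitaryGroup (Fin dA) ℂ) (hV : V ∈ unitaryGroup (Fin dB) ℂ)
    (hW : W ∈ unitaryGroup (Fin dC) ℂ) (hdiag : ((V ⊗ₖ W)ᴴ * trA ρ * (V ⊗ₖ W)).IsDiag) :
    trA (pinch (U ⊗ₖ (V ⊗ₖ W)) ρ) = trA ρ := by
  let e : (Fin dB × Fin dC) × Fin dA ≃ Fin dA × Fin dB × Fin dC := Equiv.prodComm _ _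
  have htr (X : Tri dA dB dC) : trA X = partialTraceRight (X.submatrix e e) := by
    ext x y
    simp [trA, partialTraceRight, leftBlock, Matrix.sum_apply, e]
  simp only [htr] at hdiag ⊢
  refine partialTraceRight_submatrix_pinch e (kronecker_mem_unitary hV hW) hU ?_ hdiag
  ext x y
  simp [e, mul_comm]

lemma fullyClassicalTri_pinch (hU : U ∈ unitaryGroup (Fin dA) ℂ)
    (hV : V ∈ unitaryGroup (Fin dB) ℂ) (hW : W ∈ unitaryGroup (Fin dC) ℂ) (hρ : ρ.PosSemidef) :
    FullyClassicalTri (pinch (U ⊗ₖ (V ⊗ₖ W)) ρ) := by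
  set M := U ⊗ₖ (V ⊗ₖ W) with hM
  have hnonneg (x) : 0 ≤ (Mᴴ * ρ * M) x x := (hρ.conjTranspose_mul_mul_same M).diag_nonneg
  have hreal : diag (Mᴴ * ρ * M) = fun x => (((Mᴴ * ρ * M) x x).re : ℂ) :=
    funext fun x => Complex.eq_re_of_ofReal_le (hnonneg x)
  have hcol (x : Fin dA × Fin dB × Fin dC) :
      M.col x = prod3 (U.col x.1) (V.col x.2.1) (W.col x.2.2) := by
    ext
    simp [hM, prod3, mul_assoc]
  refine ⟨U.col, V.col, W.col, fun i j k => ((Mᴴ * ρ * M) (i, j, k) (i, j, k)).re,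
    onb_col_iff.mpr hU, onb_col_iff.mpr hV, onb_col_iff.mpr hW,
    fun i j k => (Complex.nonneg_iff.mp (hnonneg (i, j, k))).1, ?_⟩
  rw [pinch, hreal, ← sum_smul_projV_col]
  simp only [hcol, Fintype.sum_prod_type]

lemma exists_unitary_pinch_preserves_marginals
    (hAB : FullyClassical (trC ρ)) (hAC : FullyClassical (trB ρ)) (hBC : FullyClassical (trA ρ))
    (hABAC : Commute (embAB (trC ρ) dC) (embAC (trB ρ) dB))
    (hABBC : Commute (embAB (trC ρ) dC) (embBC (trA ρ) dA))
    (hACBC : Commute (embAC (trB ρ) dB) (embBC (trA ρ) dA)) :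
    ∃ U ∈ unitaryGroup (Fin dA) ℂ, ∃ V ∈ unitaryGroup (Fin dB) ℂ, ∃ W ∈ unitaryGroup (Fin dC) ℂ,
      trC (pinch (U ⊗ₖ (V ⊗ₖ W)) ρ) = trC ρ ∧ trB (pinch (U ⊗ₖ (V ⊗ₖ W)) ρ) = trB ρ ∧
        trA (pinch (U ⊗ₖ (V ⊗ₖ W)) ρ) = trA ρ := by
  obtain ⟨U, hU, hdiagU⟩ :=
    hAB.simultaneouslyDiagonalizable_leftBlock.sumElim hAC.simultaneouslyDiagonalizable_leftBlock
      fun _ _ => commute_leftBlock_leftBlock hABAC ..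
  obtain ⟨V, hV, hdiagV⟩ :=
    hAB.simultaneouslyDiagonalizable_rightBlock.sumElim hBC.simultaneouslyDiagonalizable_leftBlock
      fun _ _ => commute_rightBlock_leftBlock hABBC ..
  obtain ⟨W, hW, hdiagW⟩ :=
    hAC.simultaneouslyDiagonalizable_rightBlock.sumElim hBC.simultaneouslyDiagonalizable_rightBlock
      fun _ _ => commute_rightBlock_rightBlock hACBC ..
  refine ⟨U, hU, V, hV, W, hW, trC_pinch hU hV hW ?_, trB_pinch hU hV hW ?_, trA_pinch hU hV hW ?_⟩
  · exact (isDiag_kronecker_conj_iff hU hV).mpr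
      ⟨fun b b' => hdiagU (.inl (b, b')), fun a a' => hdiagV (.inl (a, a'))⟩
  · exact (isDiag_kronecker_conj_iff hU hW).mpr
      ⟨fun c c' => hdiagU (.inr (c, c')), fun a a' => hdiagW (.inl (a, a'))⟩
  · exact (isDiag_kronecker_conj_iff hV hW).mpr
      ⟨fun c c' => hdiagV (.inr (c, c')), fun b b' => hdiagW (.inr (b, b'))⟩

end Tripartite

/-- compatible fully classical bipartite states with pairwise commuting
embeddings are compatible with a fully classical tripartite state. -/
theorem stmt_5 {dA dB dC : ℕ}
    (ρAB : Bip dA dB) (ρAC : Bip dA dC) (ρBC : Bip dB dC)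
    (hfcAB : FullyClassical ρAB) (hfcAC : FullyClassical ρAC)
    (hfcBC : FullyClassical ρBC)
    (ρABC : Tri dA dB dC) (hρ : IsDensity ρABC)
    (hAB : trC ρABC = ρAB) (hAC : trB ρABC = ρAC) (hBC : trA ρABC = ρBC)
    (h1 : embAB ρAB dC * embAC ρAC dB = embAC ρAC dB * embAB ρAB dC)
    (h2 : embAB ρAB dC * embBC ρBC dA = embBC ρBC dA * embAB ρAB dC)
    (h3 : embAC ρAC dB * embBC ρBC dA = embBC ρBC dA * embAC ρAC dB) :
    ∃ σ : Tri dA dB dC, IsDensity σ ∧ FullyClassicalTri σ ∧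
      trC σ = ρAB ∧ trB σ = ρAC ∧ trA σ = ρBC := by
  subst hAB hAC hBC
  obtain ⟨U, hU, V, hV, W, hW, hC, hB, hA⟩ :=
    exists_unitary_pinch_preserves_marginals hfcAB hfcAC hfcBC h1 h2 h3
  have hM : U ⊗ₖ (V ⊗ₖ W) ∈ unitaryGroup (Fin dA × Fin dB × Fin dC) ℂ :=
    kronecker_mem_unitary hU (kronecker_mem_unitary hV hW)
  exact ⟨pinch (U ⊗ₖ (V ⊗ₖ W)) ρABC, hρ.pinch hM, fullyClassicalTri_pinch hU hV hW hρ.1,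
    hC, hB, hA⟩

end QMarginal
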